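/- Let E be a lattice effect algebra and define x·y := ((x'∧y)⊕y')' for all x,y ∈ E. Then for all a, b ∈ E: a·(b·a') = 0 and (b·a')·a = 0 (i.e., the identity (NG4) holds in (E;·,',0,1)). -/

import Mathlib

/-- An effect algebra: a partial algebra (E;⊕,',0,1). The partial operation ⊕ is
modeled by a definedness predicate `D` together with a total function `add` whose
value is only meaningful on defined pairs. -/
structure EffectAlgebra (E : Type*) where
  /-- definedness of `x ⊕ y` -/
  D : E → E → Prop
  /-- the value of `x ⊕ y` (meaningful only when `D x y`) -/
  add : E → E → E
  zero : E
  one : E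
  /-- the complement `x'` -/
  compl : E → E
  /-- (E1) commutativity -/
  E1 : ∀ x y, D x y → D y x ∧ add x y = add y x
  /-- (E2) associativity -/
  E2 : ∀ x y z, D x y → D (add x y) z →
    D y z ∧ D x (add y z) ∧ add (add x y) z = add x (add y z)
  /-- (E3) existence of the complement -/
  E3a : ∀ x, D x (compl x)
  E3b : ∀ x, add x (compl x) = one
  /-- (E3) uniqueness of the complement -/
  E3c : ∀ x y, D x y → add x y = one → y = compl x
  /-- (E4) -/
  E4 : ∀ x, D x one → x = zero

/-- The induced order of an effect algebra: `a ≤ b` iff `a ⊕ c = b` for some `c`. -/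
def EffectAlgebra.le {E : Type*} (A : EffectAlgebra E) (a b : E) : Prop :=
  ∃ c, A.D a c ∧ A.add a c = b

/-- A lattice effect algebra: an effect algebra whose induced order is a lattice,
with meet `inf` and join `sup`. -/
structure LatticeEffectAlgebra (E : Type*) extends EffectAlgebra E where
  inf : E → E → E
  sup : E → E → E
  inf_le_left : ∀ a b, toEffectAlgebra.le (inf a b) a
  inf_le_right : ∀ a b, toEffectAlgebra.le (inf a b) b
  le_inf : ∀ a b c, toEffectAlgebra.le c a → toEffectAlgebra.le c b →
    toEffectAlgebra.le c (inf a b)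
  le_sup_left : ∀ a b, toEffectAlgebra.le a (sup a b)
  le_sup_right : ∀ a b, toEffectAlgebra.le b (sup a b)
  sup_le : ∀ a b c, toEffectAlgebra.le a c → toEffectAlgebra.le b c →
    toEffectAlgebra.le (sup a b) c

/-- The total operation `x·y := ((x'∧y)⊕y')'` on a lattice effect algebra
(well defined since `x'∧y ≤ y`). -/
def LatticeEffectAlgebra.prod {E : Type*} (A : LatticeEffectAlgebra E) (x y : E) : E :=
  A.compl (A.add (A.inf (A.compl x) y) (A.compl y))


namespace EffectAlgebra

variable {E : Type*} (A : EffectAlgebra E)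

theorem compl_compl (x : E) : A.compl (A.compl x) = x := by
  obtain ⟨hD, hadd⟩ := A.E1 _ _ (A.E3a x)
  exact (A.E3c _ _ hD (hadd ▸ A.E3b x)).symm

theorem compl_one : A.compl A.one = A.zero :=
  A.E4 _ (A.E1 _ _ (A.E3a A.one)).1

theorem D_zero_one : A.D A.zero A.one := by
  have h := (A.E1 _ _ (A.E3a A.one)).1
  rwa [A.compl_one] at h

theorem eq_zero_of_add_eq_self {x y : E} (hD : A.D x y) (h : A.add x y = x) :
    y = A.zero := by
  obtain ⟨hD', hadd⟩ := A.E1 _ _ hD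
  have hx : A.D (A.add y x) (A.compl x) := by
    rw [← hadd, h]
    exact A.E3a x
  have hy := (A.E2 _ _ _ hD' hx).2.1
  rw [A.E3b] at hy
  exact A.E4 _ hy

theorem eq_zero_of_add_eq_zero {x y : E} (hD : A.D x y) (h : A.add x y = A.zero) :
    y = A.zero :=
  A.E4 _ (A.E2 _ _ A.one hD (h ▸ A.D_zero_one)).1

theorem le_antisymm {x y : E} (hxy : A.le x y) (hyx : A.le y x) : x = y := by
  obtain ⟨c, hc, rfl⟩ := hxy
  obtain ⟨d, hd, h⟩ := hyx
  obtain ⟨hcd, hxcd, hassoc⟩ := A.E2 _ _ _ hc hd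
  have hself : A.add x (A.add c d) = x := hassoc.symm.trans h
  have hzero := A.eq_zero_of_add_eq_self hxcd hself
  obtain ⟨hdc, hcomm⟩ := A.E1 _ _ hcd
  have hc0 : c = A.zero := A.eq_zero_of_add_eq_zero hdc (hcomm.symm.trans hzero)
  rw [hzero] at hself
  rw [hc0, hself]

theorem le_refl (x : E) : A.le x x := by
  obtain ⟨hD, hadd⟩ := A.E1 _ _ (A.E3a x)
  have h1 : A.D (A.add (A.compl x) x) A.zero := by
    rw [← hadd, A.E3b]
    exact (A.E1 _ _ A.D_zero_one).1
  obtain ⟨hx0, hD', hassoc⟩ := A.E2 _ _ _ hD h1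
  have h2 : A.add A.one A.zero = A.one := by
    rw [← A.compl_one]
    exact A.E3b A.one
  have h3 : A.add (A.compl x) (A.add x A.zero) = A.one := by
    rw [← hassoc, ← hadd, A.E3b, h2]
  exact ⟨A.zero, hx0, (A.E3c _ _ hD' h3).trans (A.compl_compl x)⟩

theorem le_compl_of_D {x y : E} (h : A.D x y) : A.le y (A.compl x) := by
  obtain ⟨hD, hD', hassoc⟩ := A.E2 _ _ _ h (A.E3a (A.add x y))
  exact ⟨_, hD, A.E3c _ _ hD' (hassoc.symm.trans (A.E3b _))⟩

theorem D_of_le_compl {x y : E} (h : A.le y (A.compl x)) : A.D y x := by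
  obtain ⟨e, hD, he⟩ := h
  obtain ⟨hD', hcomm⟩ := A.E1 _ _ hD
  refine (A.E2 e y x hD' ?_).1
  rw [← hcomm, he]
  exact (A.E1 _ _ (A.E3a x)).1

end EffectAlgebra

namespace LatticeEffectAlgebra

variable {E : Type*} (A : LatticeEffectAlgebra E)

theorem prod_eq_zero_of_D {x y : E} (h : A.D x y) : A.prod x y = A.zero := by
  have hinf : A.inf (A.compl x) y = y :=
    A.le_antisymm (A.inf_le_right _ _) (A.le_inf _ _ _ (A.le_compl_of_D h) (A.le_refl y))
  rw [prod, hinf, A.E3b, A.compl_one]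

theorem D_prod_compl (a b : E) : A.D a (A.prod b (A.compl a)) := by
  rw [prod, A.compl_compl]
  exact (A.E2 _ _ _ (A.D_of_le_compl (A.inf_le_right _ _)) (A.E3a _)).1

end LatticeEffectAlgebra

/-- (NG4) holds in `(E;·,',0,1)` for a lattice effect algebra `E` with
`x·y := ((x'∧y)⊕y')'`: `a·(b·a') = 0 = (b·a')·a`. -/
theorem ng4_holds {E : Type*} (A : LatticeEffectAlgebra E) (a b : E) :
    A.prod a (A.prod b (A.compl a)) = A.zero ∧
    A.prod (A.prod b (A.compl a)) a = A.zero := by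
  have h := A.D_prod_compl a b
  exact ⟨A.prod_eq_zero_of_D h, A.prod_eq_zero_of_D (A.E1 _ _ h).1⟩
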